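/- For distinct x,y∈V and any t∈ℝ^V, ε_x e^{t_x}·(A(t)+ε̂(t))^{−1}_{xy} = (Σ_{T∈𝒯_xy} Π_{(i∼j)∈T} β_ij e^{t_i+t_j}) / (Σ_{T∈𝒯} Π_{(i∼j)∈T} β_ij e^{t_i+t_j}), where 𝒯_xy := {T∈𝒯 : x∈R(T) and x ↔_T y} and β_iρ:=ε_i, t_ρ:=0. -/

import Mathlib

/-!
Orienting a spanning tree of `Γ_ρ` towards `ρ` identifies it with a parent function
`f : V → Option V` all of whose orbits reach `ρ = none` (`exists_parTree_eq`, `parTree_inj`). Its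
weight is the product of the weights `c v (f v)`, and `T ∈ 𝒯_xy` becomes the statement that the
orbit of `y` enters `ρ` from `x`, i.e. that `y` has root `x` (`rootEdge_and_connIn_iff`).

Let `N x y` be the total weight of the acyclic `f` under which `y` has root `x`, and `Z` the total
weight of all acyclic `f`. The core is the balance equation (`rootSum_balance`)
`N x z * ∑ k, c z k = δ_{xz} Z c z ρ + ∑ b, N x b * c z b`, the sum over `k` including `ρ`.
Both sides are sums over pairs of an acyclic `f` and an additional parent `k` of `z`. If redirecting
`z` to `k` creates a cycle, then the path from `k` passes through `z`, so `k` and `z` have the same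
root and the terms agree. Otherwise exchanging `f z` and `k` is a weight-preserving involution
which turns the root of `z` into the root `z` would get through `k`, and so swaps the two sides.

In matrix form the row vector `N x` satisfies `N x (A(t) + ε̂(t)) = Z ε_x e^{t_x} δ_x`
(`rootSum_vecMul`). The matrix is invertible by the maximum principle (`pinned_isUnit_det`) and
`Z > 0` because there is a spanning tree of positive weight (`totalSum_pos`), so multiplying by the
inverse matrix and dividing by `Z` gives the formula.
-/

open MeasureTheory Real Filter
open scoped BigOperators

attribute [local instance] Classical.propDecidable

namespace H22

variable {V : Type*} [Fintype V] [DecidableEq V]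

/-- The augmented graph `Γ_ρ`: add an extra vertex `ρ` (encoded by `none`)
joined to every vertex of the original graph. -/
def aug (G : SimpleGraph V) : SimpleGraph (Option V) :=
  SimpleGraph.fromRel (fun a b =>
    match a, b with
    | some i, some j => G.Adj i j
    | _, _ => True)

/-- `T` is (the edge set of) a spanning tree of `G`. -/
def IsSpanningTree {α : Type*} (G : SimpleGraph α) (T : Finset (Sym2 α)) : Prop :=
  ↑T ⊆ G.edgeSet ∧ (SimpleGraph.fromEdgeSet (↑T : Set (Sym2 α))).IsTree

/-- The finset of all spanning trees of `G`. -/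
noncomputable def STrees {α : Type*} [Fintype α] [DecidableEq α] (G : SimpleGraph α) :
    Finset (Finset (Sym2 α)) :=
  Finset.univ.filter (fun T => IsSpanningTree G T)

/-- Extension of a vector `t : V → ℝ` to `Option V` by `t_ρ := 0`. -/
def extV (t : V → ℝ) : Option V → ℝ := fun a => Option.elim a 0 t

/-- Lift of a (symmetrized) function of two vertices to unordered pairs. -/
noncomputable def esym {α : Type*} (f : α → α → ℝ) : Sym2 α → ℝ :=
  Sym2.lift ⟨fun a b => (f a b + f b a) / 2, fun a b => by ring⟩

/-- Combined edge weights on the augmented graph: `β` on edges of `Γ`,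
`ε_i` on the edge `i ∼ ρ`. -/
def bres (β : V → V → ℝ) (ε : V → ℝ) : Option V → Option V → ℝ := fun a b =>
  match a, b with
  | some i, some j => β i j
  | some i, none => ε i
  | none, some j => ε j
  | none, none => 0

/-- `B_{ij}(t,s) = cosh(t_i - t_j) + ½ (s_i - s_j)² e^{t_i+t_j}` on the augmented graph. -/
noncomputable def Bfun (t s : V → ℝ) (a b : Option V) : ℝ :=
  Real.cosh (extV t a - extV t b) +
    (1 / 2) * (extV s a - extV s b) ^ 2 * Real.exp (extV t a + extV t b)

/-- Weight `β_{ij} e^{t_i+t_j}` of an edge of the augmented graph. -/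
noncomputable def treeW (β : V → V → ℝ) (ε : V → ℝ) (t : V → ℝ) : Sym2 (Option V) → ℝ :=
  esym (fun a b => bres β ε a b * Real.exp (extV t a + extV t b))

/-- Gibbs factor `e^{-β_{ij}(B_{ij}(t,s)-1)}` of an edge of the augmented graph. -/
noncomputable def gibbs (β : V → V → ℝ) (ε : V → ℝ) (t s : V → ℝ) : Sym2 (Option V) → ℝ :=
  esym (fun a b => Real.exp (-(bres β ε a b * (Bfun t s a b - 1))))

/-- The density of the measure `μ^ε` with respect to
(Lebesgue on `ℝ^V × ℝ^V`) × (counting measure on spanning trees). -/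
noncomputable def dens (G : SimpleGraph V) (β : V → V → ℝ) (ε : V → ℝ)
    (t s : V → ℝ) (T : Finset (Sym2 (Option V))) : ℝ :=
  (∏ j, Real.exp (-t j) / (2 * Real.pi)) *
  (∏ e ∈ Finset.univ.filter (fun e : Sym2 (Option V) => e ∈ (aug G).edgeSet),
      gibbs β ε t s e) *
  (∏ e ∈ T, treeW β ε t e)

/-- Expectation of an observable `f(t,s,T)` under the measure `μ^ε`. -/
noncomputable def expect (G : SimpleGraph V) (β : V → V → ℝ) (ε : V → ℝ)
    (f : (V → ℝ) → (V → ℝ) → Finset (Sym2 (Option V)) → ℝ) : ℝ :=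
  ∑ T ∈ STrees (aug G), ∫ p : (V → ℝ) × (V → ℝ), dens G β ε p.1 p.2 T * f p.1 p.2 T

/-- The weighted graph Laplacian `A(t)` of `Γ`. -/
noncomputable def Amat (G : SimpleGraph V) (β : V → V → ℝ) (t : V → ℝ) : Matrix V V ℝ :=
  Matrix.of fun i j =>
    if i = j then ∑ k ∈ Finset.univ.filter (fun k => G.Adj k j), β k j * Real.exp (t k + t j)
    else if G.Adj i j then -(β i j * Real.exp (t i + t j)) else 0

/-- The pinning diagonal matrix `ε̂(t) = diag(ε_i e^{t_i})`. -/
noncomputable def epsHat (ε : V → ℝ) (t : V → ℝ) : Matrix V V ℝ :=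
  Matrix.diagonal fun i => ε i * Real.exp (t i)

/-- The Green's function `G^ε_{xy} = e^{t_x+t_y} (A(t)+ε̂(t))⁻¹_{xy}`. -/
noncomputable def Gfun (G : SimpleGraph V) (β : V → V → ℝ) (ε : V → ℝ)
    (t : V → ℝ) (x y : V) : ℝ :=
  Real.exp (t x + t y) * (Amat G β t + epsHat ε t)⁻¹ x y

/-- The edge `i ∼ ρ` of the augmented graph. -/
def rootEdge (i : V) : Sym2 (Option V) := s(some i, none)

/-- The set of roots `R(T) = {i ∈ V : (i ∼ ρ) ∈ T}`. -/
noncomputable def roots (T : Finset (Sym2 (Option V))) : Finset V :=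
  Finset.univ.filter fun i => rootEdge i ∈ T

/-- The forest `F(T) = T ∩ E`: edges of `T` not incident to `ρ`. -/
noncomputable def forestOf (T : Finset (Sym2 (Option V))) : Finset (Sym2 (Option V)) :=
  T.filter fun e => ¬ ((none : Option V) ∈ e)

/-- `x ↔_T y`: `x` and `y` are connected in `T` through a path not using `ρ`. -/
def connIn (T : Finset (Sym2 (Option V))) (x y : V) : Prop :=
  (SimpleGraph.fromEdgeSet (↑(forestOf T) : Set (Sym2 (Option V)))).Reachable (some x) (some y)

/-- The observable `O^π_{xy}`. -/
noncomputable def obs (pv : V → ℝ) (x y : V) (t : V → ℝ)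
    (T : Finset (Sym2 (Option V))) : ℝ :=
  Real.exp (t x + t y) / (pv x * Real.exp (t x) + pv y * Real.exp (t y)) *
    (if rootEdge x ∈ T ∧ connIn T x y then 1 else 0)

/-- The pinning `ε = (π_i ε)_{i ∈ V}`. -/
def pinOf (pv : V → ℝ) (ε : ℝ) : V → ℝ := fun i => pv i * ε

/-- The pinning `c δ_x` concentrated at the single vertex `x`. -/
def singlePin (x : V) (c : ℝ) : V → ℝ := fun i => if i = x then c else 0

end H22

namespace H22

/-! ### Parent functions and their roots -/

/-- `RootOf f a x`: following the parent function `f` from `a`, the last vertex visited before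
`ρ = none` is `x`. The derivation is the finite path from `a` to `x`, so induction on it is
induction on the distance to `ρ`. -/
inductive RootOf {V : Type*} (f : V → Option V) : V → V → Prop
  | base {a : V} (h : f a = none) : RootOf f a a
  | step {a b x : V} (h : f a = some b) (hb : RootOf f b x) : RootOf f a x

/-- The parent function `f` has no cycle: from every vertex its iterates reach `ρ = none`. -/
def Acyc {V : Type*} (f : V → Option V) : Prop := ∀ a, ∃ x, RootOf f a x

section Functions

variable {V : Type*} {f : V → Option V}

theorem RootOf.unique {a x x' : V} (h : RootOf f a x) (h' : RootOf f a x') : x = x' := by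
  induction h with
  | base h => cases h' with
    | base => rfl
    | step h1 => simp [h] at h1
  | step h hb ih => cases h' with
    | base h1 => simp [h] at h1
    | step h1 h2 =>
      rw [h] at h1
      cases h1
      exact ih h2

theorem RootOf.root_eq_none {a x : V} (h : RootOf f a x) : f x = none := by
  induction h with
  | base h => exact h
  | step _ _ ih => exact ih

theorem RootOf.step_iff {a b x : V} (h : f a = some b) : RootOf f a x ↔ RootOf f b x := by
  refine ⟨fun h' => ?_, fun h' => .step h h'⟩
  cases h' with
  | base h1 => simp [h] at h1
  | step h1 h2 =>
    rw [h] at h1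
    cases h1
    exact h2

theorem RootOf.none_iff {a x : V} (h : f a = none) : RootOf f a x ↔ a = x := by
  refine ⟨fun h' => (RootOf.base h).unique h', ?_⟩
  rintro rfl
  exact .base h

/-- A vertex whose forward orbit reaches `ρ` does not lie on a cycle. -/
theorem RootOf.not_transGen {a x : V} (h : RootOf f a x) :
    ¬ Relation.TransGen (fun u v => f u = some v) a a := by
  induction h with
  | base h =>
    intro hc
    obtain ⟨c, hc, _⟩ := Relation.TransGen.head'_iff.1 hc
    simp [h] at hc
  | @step a b x h hb ih =>
    intro hc
    obtain ⟨c, hc, hr⟩ := Relation.TransGen.head'_iff.1 hc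
    rw [h] at hc
    cases hc
    exact ih (Relation.TransGen.tail'_iff.2 ⟨a, hr, h⟩)

variable [DecidableEq V]

/-- Redirecting `z` to `k` either leaves the path from `a` to its root intact, or that path passes
through `z`; in the latter case `a` and `z` have the same root under `f`, and `a` still reaches `z`
after the redirection (the initial part of the path, up to `z`, does not use the value at `z`). -/
theorem RootOf.update {a x : V} (h : RootOf f a x) (z : V) (k : Option V) :
    RootOf (Function.update f z k) a x ∨
      (RootOf f z x ∧
        Relation.ReflTransGen (fun u v => Function.update f z k u = some v) a z) := by
  induction h with
  | @base a h =>
    by_cases haz : a = z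
    · subst haz
      exact .inr ⟨.base h, .refl⟩
    · exact .inl (.base (by simpa [haz] using h))
  | @step a b x h hb ih =>
    by_cases haz : a = z
    · subst haz
      exact .inr ⟨.step h hb, .refl⟩
    · have h1 : Function.update f z k a = some b := by simpa [haz] using h
      rcases ih with ih | ⟨ih, ih'⟩
      · exact .inl (.step h1 ih)
      · exact .inr ⟨ih, .head h1 ih'⟩

/-- After redirecting one vertex `z` of an acyclic function, only the orbit of `z` has to be
checked. -/
theorem Acyc.update (hf : Acyc f) (z : V) (k : Option V)
    (hz : ∃ x, RootOf (Function.update f z k) z x) : Acyc (Function.update f z k) := by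
  intro a
  obtain ⟨x, hx⟩ := hf a
  induction hx with
  | @base a h =>
    by_cases haz : a = z
    · exact haz ▸ hz
    · exact ⟨a, .base (by simpa [haz] using h)⟩
  | @step a b x h hb ih =>
    by_cases haz : a = z
    · exact haz ▸ hz
    · obtain ⟨x', hx'⟩ := ih
      exact ⟨x', .step (by simpa [haz] using h) hx'⟩

/-- The root that `z` acquires when its parent is set to `k`, computed from `f` before the
redirection, is `x`: it is `z` itself if `k = ρ`, and otherwise the root of `k` under `f`. -/
def RootVia (f : V → Option V) (z : V) (k : Option V) (x : V) : Prop :=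
  match k with
  | none => z = x
  | some b => RootOf f b x

/-- If redirecting `z` to `k` creates no cycle, the path of `k` avoids `z`, so its root is
unaffected. -/
theorem rootVia_of_acyc (hf : Acyc f) {z : V} {k : Option V} {x : V}
    (hg : Acyc (Function.update f z k)) :
    RootVia f z k x ↔ RootOf (Function.update f z k) z x := by
  cases k with
  | none => exact (RootOf.none_iff (by simp)).symm
  | some b =>
    have hzb : Function.update f z (some b) z = some b := by simp
    rw [RootOf.step_iff hzb]
    obtain ⟨x₀, hx₀⟩ := hf b
    rcases hx₀.update z (some b) with h | ⟨-, h⟩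
    · exact ⟨fun h' => h'.unique hx₀ ▸ h, fun h' => h'.unique h ▸ hx₀⟩
    · obtain ⟨_, hy⟩ := hg z
      exact absurd (Relation.TransGen.head'_iff.2 ⟨b, hzb, h⟩) hy.not_transGen

/-- If redirecting `z` to `k` creates a cycle, the path of `k` passes through `z`, so `k` and `z`
have the same root under `f`. -/
theorem rootVia_of_not_acyc (hf : Acyc f) {z : V} {k : Option V} {x : V}
    (hg : ¬ Acyc (Function.update f z k)) :
    RootVia f z k x ↔ RootOf f z x := by
  cases k with
  | none => exact absurd (hf.update z none ⟨z, .base (by simp)⟩) hg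
  | some b =>
    obtain ⟨x₀, hx₀⟩ := hf b
    rcases hx₀.update z (some b) with h | ⟨h, -⟩
    · exact absurd (hf.update z (some b) ⟨x₀, .step (by simp) h⟩) hg
    · exact ⟨fun h' => h'.unique hx₀ ▸ h, fun h' => h'.unique h ▸ hx₀⟩

variable [Fintype V]

/-! ### The balance equation -/

/-- The weight of a parent function, for the weight `c v k` of letting `k` be the parent of `v`. -/
noncomputable def fnWeight (c : V → Option V → ℝ) (f : V → Option V) : ℝ := ∏ v, c v (f v)

/-- The exchange `(f, k) ↦ (f with z redirected to k, f z)` preserves the weight of a parent function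
together with one additional edge at `z`. -/
theorem fnWeight_update (c : V → Option V → ℝ) (f : V → Option V) (z : V) (k : Option V) :
    fnWeight c (Function.update f z k) * c z (f z) = fnWeight c f * c z k := by
  have h : ∀ g : V → Option V,
      fnWeight c g = c z (g z) * ∏ v ∈ Finset.univ.erase z, c v (g v) := fun g =>
    (Finset.mul_prod_erase _ _ (Finset.mem_univ z)).symm
  rw [h, h f, Finset.prod_congr rfl (g := fun v => c v (f v))]
  · simp only [Function.update_self]; ring
  · intro v hv
    rw [Function.update_of_ne (Finset.ne_of_mem_erase hv)]

/-- Total weight of the acyclic parent functions under which `y` has root `x`. -/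
noncomputable def rootSum (c : V → Option V → ℝ) (x y : V) : ℝ :=
  ∑ f : V → Option V, if Acyc f ∧ RootOf f y x then fnWeight c f else 0

/-- Total weight of all acyclic parent functions. -/
noncomputable def totalSum (c : V → Option V → ℝ) : ℝ :=
  ∑ f : V → Option V, if Acyc f then fnWeight c f else 0

/-- For pairs of an acyclic `f` and an additional parent `k` for `z`, the conditions that `z` has
root `x`, and that `z` would have root `x` if redirected to `k`, carry the same total weight. -/
theorem sum_root_eq_sum_rootVia (c : V → Option V → ℝ) (x z : V) :
    (∑ p : (V → Option V) × Option V,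
        if Acyc p.1 ∧ RootOf p.1 z x then fnWeight c p.1 * c z p.2 else 0) =
      ∑ p : (V → Option V) × Option V,
        if Acyc p.1 ∧ RootVia p.1 z p.2 x then fnWeight c p.1 * c z p.2 else 0 := by
  rw [← Finset.sum_filter_add_sum_filter_not _
      (fun p : (V → Option V) × Option V => Acyc p.1 ∧ Acyc (Function.update p.1 z p.2)),
    ← Finset.sum_filter_add_sum_filter_not (f := fun p : (V → Option V) × Option V =>
        if Acyc p.1 ∧ RootVia p.1 z p.2 x then _ else _) _
      (fun p : (V → Option V) × Option V => Acyc p.1 ∧ Acyc (Function.update p.1 z p.2))]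
  congr 1
  -- Where the redirection stays acyclic, the exchange of `k` and `f z` is a weight-preserving
  -- involution that swaps the two conditions; elsewhere the conditions agree pointwise.
  · refine Finset.sum_nbij' (fun p => (Function.update p.1 z p.2, p.1 z))
      (fun p => (Function.update p.1 z p.2, p.1 z)) ?_ ?_ ?_ ?_ ?_
    · rintro ⟨f, k⟩ h
      simpa [and_comm] using h
    · rintro ⟨f, k⟩ h
      simpa [and_comm] using h
    · rintro ⟨f, k⟩ h
      simp
    · rintro ⟨f, k⟩ h
      simp
    · rintro ⟨f, k⟩ h
      obtain ⟨hf, hg⟩ := by simpa using h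
      have hg' : Acyc (Function.update (Function.update f z k) z (f z)) := by simpa using hf
      have := rootVia_of_acyc hg hg' (x := x)
      simp only [Function.update_idem, Function.update_eq_self] at this
      simp only [hf, hg, true_and, this, fnWeight_update]
  · refine Finset.sum_congr rfl ?_
    rintro ⟨f, k⟩ h
    by_cases hf : Acyc f
    · have hg : ¬ Acyc (Function.update f z k) := by simpa [hf] using h
      simp only [hf, true_and, rootVia_of_not_acyc hf hg]
    · simp [hf]

/-- The balance equation: `y ↦ rootSum c x y` solves the pinned Laplace equation with a source at
`x`. -/
theorem rootSum_balance (c : V → Option V → ℝ) (x z : V) :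
    rootSum c x z * ∑ k, c z k =
      (if z = x then totalSum c * c z none else 0) + ∑ b, rootSum c x b * c z (some b) := by
  have h := sum_root_eq_sum_rootVia c x z
  rw [Fintype.sum_prod_type, Fintype.sum_prod_type_right, Fintype.sum_option] at h
  unfold rootSum totalSum
  simp only [Finset.sum_mul, Finset.mul_sum, ite_mul, zero_mul]
  rw [Finset.sum_comm, h]
  congr 1
  simp only [RootVia]
  split_ifs with hz <;> simp [hz]

end Functions

/-! ### Spanning trees and parent functions -/

theorem acyc_of_lt {V : Type*} {f : V → Option V} (d : V → ℕ)
    (h : ∀ v b, f v = some b → d b < d v) : Acyc f := by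
  intro a
  induction hn : d a using Nat.strong_induction_on generalizing a with
  | _ n ih =>
    cases hfa : f a with
    | none => exact ⟨a, .base hfa⟩
    | some b =>
      obtain ⟨x, hx⟩ := ih (d b) (hn ▸ h a b hfa) b rfl
      exact ⟨x, .step hfa hx⟩

/-- In a connected graph every vertex other than `r` has a neighbour strictly closer to `r`. -/
theorem exists_adj_dist_lt {α : Type*} {H : SimpleGraph α} (hH : H.Connected) {v r : α}
    (hv : v ≠ r) : ∃ u, H.Adj v u ∧ H.dist u r < H.dist v r := by
  obtain ⟨p, hp⟩ := hH.exists_walk_length_eq_dist v r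
  cases p with
  | nil => exact absurd rfl hv
  | cons h q =>
    refine ⟨_, h, ?_⟩
    have := SimpleGraph.dist_le q
    simp at hp
    omega

theorem Acyc.ne_some_self {V : Type*} {f : V → Option V} (hf : Acyc f) (v : V) : f v ≠ some v := by
  obtain ⟨_, hx⟩ := hf v
  exact fun h => hx.not_transGen (.single h)

theorem Acyc.ne_some_of_eq_some {V : Type*} {f : V → Option V} (hf : Acyc f) {u v : V}
    (h : f v = some u) : f u ≠ some v := by
  obtain ⟨_, hx⟩ := hf v
  exact fun h' => hx.not_transGen (.tail (.single h) h')

section Trees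
variable {V : Type*} [Fintype V] [DecidableEq V]

/-- The edge set `{v ∼ f v}` on `V ∪ {ρ}` of a parent function `f`. -/
noncomputable def parTree (f : V → Option V) : Finset (Sym2 (Option V)) :=
  Finset.univ.image fun v => s(some v, f v)

theorem mem_parTree {f : V → Option V} {e : Sym2 (Option V)} :
    e ∈ parTree f ↔ ∃ v, s(some v, f v) = e := by
  simp [parTree]

theorem some_none_mem_parTree {f : V → Option V} {v : V} :
    s(some v, none) ∈ parTree f ↔ f v = none := by
  rw [mem_parTree]
  constructor
  · rintro ⟨w, hw⟩
    rw [Sym2.eq_iff] at hw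
    rcases hw with ⟨h1, h2⟩ | ⟨h1, -⟩
    · cases h1; exact h2
    · simp at h1
  · intro h
    exact ⟨v, by rw [h]⟩

theorem some_some_mem_parTree {f : V → Option V} {a b : V} :
    s(some a, some b) ∈ parTree f ↔ f a = some b ∨ f b = some a := by
  rw [mem_parTree]
  constructor
  · rintro ⟨w, hw⟩
    rw [Sym2.eq_iff] at hw
    rcases hw with ⟨h1, h2⟩ | ⟨h1, h2⟩ <;> cases h1
    · exact .inl h2
    · exact .inr h2
  · rintro (h | h)
    · exact ⟨a, by rw [h]⟩
    · exact ⟨b, by rw [h, Sym2.eq_swap]⟩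

theorem parTree_adj {f : V → Option V} (hf : Acyc f) (v : V) :
    (SimpleGraph.fromEdgeSet (↑(parTree f) : Set (Sym2 (Option V)))).Adj (some v) (f v) := by
  rw [SimpleGraph.fromEdgeSet_adj]
  exact ⟨Finset.mem_coe.2 (mem_parTree.2 ⟨v, rfl⟩), fun h => hf.ne_some_self v h.symm⟩

theorem parTree_connected {f : V → Option V} (hf : Acyc f) :
    (SimpleGraph.fromEdgeSet (↑(parTree f) : Set (Sym2 (Option V)))).Connected := by
  rw [SimpleGraph.connected_iff_exists_forall_reachable]
  refine ⟨none, fun w => SimpleGraph.Reachable.symm ?_⟩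
  cases w with
  | none => exact .rfl
  | some v =>
    obtain ⟨x, hx⟩ := hf v
    induction hx with
    | @base a h => exact h ▸ (parTree_adj hf a).reachable
    | @step a b x h _ ih => exact (h ▸ parTree_adj hf a).reachable.trans ih

theorem card_edgeSet_parTree {f : V → Option V} (hf : Acyc f) :
    Nat.card (SimpleGraph.fromEdgeSet (↑(parTree f) : Set (Sym2 (Option V)))).edgeSet =
      (parTree f).card := by
  rw [SimpleGraph.edgeSet_fromEdgeSet, Nat.card_coe_set_eq, sdiff_eq_left.2,
    Set.ncard_coe_finset]
  rw [Set.disjoint_left]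
  rintro e he hd
  obtain ⟨v, rfl⟩ := mem_parTree.1 (Finset.mem_coe.1 he)
  exact hf.ne_some_self v (Eq.symm (by simpa using hd))

/-- An acyclic `f` gives exactly `|V|` edges: at most that many as an image of `V`, and at least that
many because they connect `|V| + 1` vertices. -/
theorem card_parTree {f : V → Option V} (hf : Acyc f) :
    (parTree f).card = Fintype.card V := by
  refine le_antisymm Finset.card_image_le ?_
  have h := (parTree_connected hf).card_vert_le_card_edgeSet_add_one
  rw [card_edgeSet_parTree hf] at h
  simpa using h

theorem parTree_isTree {f : V → Option V} (hf : Acyc f) :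
    (SimpleGraph.fromEdgeSet (↑(parTree f) : Set (Sym2 (Option V)))).IsTree := by
  rw [SimpleGraph.isTree_iff_connected_and_card, card_edgeSet_parTree hf, card_parTree hf]
  exact ⟨parTree_connected hf, by simp⟩

theorem prod_parTree {f : V → Option V} (hf : Acyc f) (w : Sym2 (Option V) → ℝ) :
    ∏ e ∈ parTree f, w e = ∏ v, w s(some v, f v) := by
  refine Finset.prod_image ?_
  exact Finset.card_image_iff.1 (card_parTree hf)

/-- The parent function is determined by its tree; the induction runs along the path of `v` to
`ρ`. -/
theorem parTree_inj {f g : V → Option V} (hf : Acyc f)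
    (h : parTree f = parTree g) : f = g := by
  funext v
  obtain ⟨x, hx⟩ := hf v
  induction hx with
  | @base a ha =>
    have h1 : s(some a, none) ∈ parTree g := h ▸ some_none_mem_parTree.2 ha
    rw [ha, some_none_mem_parTree.1 h1]
  | @step a b x ha _ ih =>
    have h1 : s(some a, some b) ∈ parTree g := h ▸ some_some_mem_parTree.2 (.inl ha)
    rcases some_some_mem_parTree.1 h1 with h1 | h1
    · rw [ha, h1]
    · exact absurd (ih.trans h1) (hf.ne_some_of_eq_some ha)

/-- Every spanning tree comes from an acyclic parent function: let the parent of `v` be a neighbour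
of `v` in the tree that is closer to `ρ`. -/
theorem exists_parTree_eq {T : Finset (Sym2 (Option V))}
    (hT : (SimpleGraph.fromEdgeSet (↑T : Set (Sym2 (Option V)))).IsTree)
    (hd : ∀ e ∈ T, ¬ e.IsDiag) :
    ∃ f, Acyc f ∧ parTree f = T := by
  have hc := hT.connected
  choose f hadj hlt using fun v : V => exists_adj_dist_lt hc (Option.some_ne_none v)
  have hf : Acyc f := by
    refine acyc_of_lt
      (fun v => (SimpleGraph.fromEdgeSet (↑T : Set (Sym2 (Option V)))).dist (some v) none) ?_
    intro v b hb
    have := hlt v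
    rwa [hb] at this
  refine ⟨f, hf, Finset.eq_of_subset_of_card_le ?_ ?_⟩
  · intro e he
    obtain ⟨v, rfl⟩ := mem_parTree.1 he
    exact (SimpleGraph.fromEdgeSet_adj _).1 (hadj v) |>.1
  · have h := (SimpleGraph.isTree_iff_connected_and_card.1 hT).2
    rw [SimpleGraph.edgeSet_fromEdgeSet, Nat.card_coe_set_eq, sdiff_eq_left.2,
      Set.ncard_coe_finset] at h
    · rw [card_parTree hf]
      simp at h
      exact h.le
    · exact Set.disjoint_left.2 fun e he h => hd e he (by simpa using h)

/-- `T ∈ 𝒯_xy` says that the root of `y` in the parent function of `T` is `x`. -/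
theorem rootEdge_and_connIn_iff {f : V → Option V} (hf : Acyc f) (x y : V) :
    rootEdge x ∈ parTree f ∧ connIn (parTree f) x y ↔ RootOf f y x := by
  have hadj : ∀ u v : Option V,
      (SimpleGraph.fromEdgeSet (↑(forestOf (parTree f)) : Set (Sym2 (Option V)))).Adj u v ↔
        ∃ a b, u = some a ∧ v = some b ∧ (f a = some b ∨ f b = some a) := by
    intro u v
    rw [SimpleGraph.fromEdgeSet_adj, Finset.mem_coe, forestOf, Finset.mem_filter]
    constructor
    · rintro ⟨⟨h1, h2⟩, -⟩
      cases u with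
      | none => simp at h2
      | some a =>
        cases v with
        | none => simp at h2
        | some b => exact ⟨a, b, rfl, rfl, some_some_mem_parTree.1 h1⟩
    · rintro ⟨a, b, rfl, rfl, h⟩
      refine ⟨⟨some_some_mem_parTree.2 h, by simp⟩, ?_⟩
      intro hab
      cases hab
      exact h.elim (hf.ne_some_self a) (hf.ne_some_self a)
  constructor
  · rintro ⟨h1, ⟨p⟩⟩
    have hx : RootOf f x x := .base (some_none_mem_parTree.1 h1)
    -- Along an edge of the forest the root does not change.
    suffices H : ∀ u v, (SimpleGraph.fromEdgeSet
        (↑(forestOf (parTree f)) : Set (Sym2 (Option V)))).Walk u v →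
        ∀ a b, u = some a → v = some b → RootOf f a x → RootOf f b x from
      H _ _ p x y rfl rfl hx
    intro u v p
    induction p with
    | nil =>
      rintro a b rfl h
      cases h
      exact id
    | cons h _ ih =>
      rintro a b rfl rfl ha
      obtain ⟨a', c, ha', rfl, hac⟩ := (hadj _ _).1 h
      cases ha'
      refine ih c b rfl rfl ?_
      rcases hac with hac | hac
      · exact (RootOf.step_iff hac).1 ha
      · exact .step hac ha
  · intro h
    refine ⟨some_none_mem_parTree.2 h.root_eq_none, SimpleGraph.Reachable.symm ?_⟩
    induction h with
    | base _ => exact .rfl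
    | @step a b x hab _ ih =>
      exact ((hadj _ _).2 ⟨a, b, rfl, rfl, .inl hab⟩).reachable.trans ih

end Trees

section Main
variable {V : Type*} [Fintype V] [DecidableEq V]

/-! ### Edge weights of the augmented graph -/

/-- The weight `β_vk e^{t_v + t_k}` of the edge from `v` to a potential parent `k`, with
`β_vρ = ε_v` and `t_ρ = 0`; it is zero if `v` and `k` are not adjacent. -/
noncomputable def edgeW (G : SimpleGraph V) (β : V → V → ℝ) (ε t : V → ℝ) (v : V) :
    Option V → ℝ
  | none => ε v * Real.exp (t v)
  | some u => if G.Adj v u then β v u * Real.exp (t v + t u) else 0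

theorem aug_adj_some {V : Type*} {G : SimpleGraph V} {u v : V} :
    (aug G).Adj (some u) (some v) ↔ G.Adj u v := by
  simp only [aug, SimpleGraph.fromRel_adj]
  constructor
  · rintro ⟨-, h | h⟩
    · exact h
    · exact h.symm
  · intro h
    exact ⟨fun h' => h.ne (Option.some.inj h'), .inl h⟩

theorem aug_adj_none {V : Type*} {G : SimpleGraph V} {v : V} : (aug G).Adj (some v) none := by
  simp [aug, SimpleGraph.fromRel_adj]

theorem edgeW_eq_treeW {V : Type*} {G : SimpleGraph V} {β : V → V → ℝ} (hβ : ∀ i j, β i j = β j i)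
    (ε t : V → ℝ) {v : V} {k : Option V} (h : (aug G).Adj (some v) k) :
    treeW β ε t s(some v, k) = edgeW G β ε t v k := by
  cases k with
  | none => simp [treeW, esym, edgeW, bres, extV]
  | some u =>
    have h' := aug_adj_some.1 h
    simp only [treeW, esym, edgeW, bres, extV, Sym2.lift_mk, Option.elim_some, h', if_true]
    rw [hβ u v, add_comm (t u) (t v)]
    ring

theorem aug_adj_of_edgeW_ne_zero {V : Type*} {G : SimpleGraph V} {β : V → V → ℝ} {ε t : V → ℝ} {v : V}
    {k : Option V} (h : edgeW G β ε t v k ≠ 0) : (aug G).Adj (some v) k := by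
  cases k with
  | none => exact aug_adj_none
  | some u =>
    rw [aug_adj_some]
    by_contra hn
    exact h (by simp [edgeW, hn])

/-- Weighted sums over spanning trees of `Γ_ρ` are weighted sums over acyclic parent functions.
Functions with a step that is not an edge of `Γ_ρ` have weight zero. -/
theorem sum_trees_eq (G : SimpleGraph V) {β : V → V → ℝ} (hβ : ∀ i j, β i j = β j i)
    (ε t : V → ℝ) (P : Finset (Sym2 (Option V)) → Prop) (Q : (V → Option V) → Prop)
    (hPQ : ∀ f, Acyc f → (P (parTree f) ↔ Q f)) :
    ∑ T ∈ (STrees (aug G)).filter P, ∏ e ∈ T, treeW β ε t e =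
      ∑ f : V → Option V, if Acyc f ∧ Q f then fnWeight (edgeW G β ε t) f else 0 := by
  rw [← Finset.sum_filter,
    ← Finset.sum_filter_of_ne (p := fun f : V → Option V => ∀ v, (aug G).Adj (some v) (f v))]
  · symm
    refine Finset.sum_bij (fun f _ => parTree f) ?_ ?_ ?_ ?_
    · intro f hf
      simp only [Finset.mem_filter, Finset.mem_univ, true_and] at hf
      simp only [Finset.mem_filter, STrees, Finset.mem_univ, true_and]
      refine ⟨⟨?_, parTree_isTree hf.1.1⟩, (hPQ f hf.1.1).2 hf.1.2⟩
      intro e he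
      obtain ⟨v, rfl⟩ := mem_parTree.1 (Finset.mem_coe.1 he)
      exact hf.2 v
    · intro f hf g _ h
      simp only [Finset.mem_filter, Finset.mem_univ, true_and] at hf
      exact parTree_inj hf.1.1 h
    · intro T hT
      simp only [Finset.mem_filter, STrees, Finset.mem_univ, true_and] at hT
      obtain ⟨⟨hsub, htree⟩, hP⟩ := hT
      obtain ⟨f, hf, rfl⟩ := exists_parTree_eq htree
        fun e he => (aug G).not_isDiag_of_mem_edgeSet (hsub he)
      refine ⟨f, ?_, rfl⟩
      simp only [Finset.mem_filter, Finset.mem_univ, true_and]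
      exact ⟨⟨hf, (hPQ f hf).1 hP⟩, fun v => hsub (mem_parTree.2 ⟨v, rfl⟩)⟩
    · intro f hf
      simp only [Finset.mem_filter, Finset.mem_univ, true_and] at hf
      rw [prod_parTree hf.1.1]
      exact Finset.prod_congr rfl fun v _ => (edgeW_eq_treeW hβ ε t (hf.2 v)).symm
  · intro f _ hne v
    exact aug_adj_of_edgeW_ne_zero (Finset.prod_ne_zero_iff.1 hne v (Finset.mem_univ v))

theorem totalSum_pos {G : SimpleGraph V} (hG : G.Connected) {β : V → V → ℝ}
    (hβpos : ∀ i j, G.Adj i j → 0 < β i j) {ε : V → ℝ} (hε : ∀ i, 0 ≤ ε i)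
    (hε' : ∃ i, 0 < ε i) (t : V → ℝ) : 0 < totalSum (edgeW G β ε t) := by
  have hnn : ∀ v k, 0 ≤ edgeW G β ε t v k := by
    intro v k
    cases k with
    | none => exact mul_nonneg (hε v) (Real.exp_pos _).le
    | some u =>
      simp only [edgeW]
      split_ifs with h
      · exact mul_nonneg (hβpos _ _ h).le (Real.exp_pos _).le
      · exact le_rfl
  obtain ⟨r, hr⟩ := hε'
  choose p hadj hlt using fun (v : V) (hv : v ≠ r) => exists_adj_dist_lt hG hv
  -- A breadth-first spanning tree of `Γ`, attached to `ρ` through the single vertex `r`.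
  let f : V → Option V := fun v => if h : v = r then none else some (p v h)
  have hf : Acyc f := by
    refine acyc_of_lt (fun v => G.dist v r) ?_
    intro v b hb
    by_cases hv : v = r
    · simp [f, hv] at hb
    · simp only [f, hv, dite_false, Option.some.injEq] at hb
      exact hb ▸ hlt v hv
  refine Finset.sum_pos' (fun g _ => ?_) ⟨f, Finset.mem_univ f, ?_⟩
  · split_ifs
    · exact Finset.prod_nonneg fun v _ => hnn _ _
    · exact le_rfl
  · rw [if_pos hf]
    refine Finset.prod_pos fun v _ => ?_
    by_cases hv : v = r
    · subst hv
      simpa [f, edgeW] using mul_pos hr (Real.exp_pos _)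
    · simpa [f, hv, edgeW, hadj v hv] using mul_pos (hβpos _ _ (hadj v hv)) (Real.exp_pos _)

/-! ### The pinned Laplacian -/

/-- The entries of `A(t) + ε̂(t)` in terms of the edge weights. -/
theorem pinned_apply (G : SimpleGraph V) {β : V → V → ℝ} (hβ : ∀ i j, β i j = β j i)
    (ε t : V → ℝ) (i j : V) :
    (Amat G β t + epsHat ε t) i j =
      (if i = j then ∑ k, edgeW G β ε t j k else 0) - edgeW G β ε t j (some i) := by
  by_cases h : i = j
  · subst h
    simp only [Amat, epsHat, Matrix.add_apply, Matrix.of_apply, if_true, Matrix.diagonal_apply_eq,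
      Fintype.sum_option, edgeW, SimpleGraph.irrefl, if_false, sub_zero, Finset.sum_filter]
    rw [add_comm]
    congr 1
    refine Finset.sum_congr rfl fun k _ => ?_
    rw [G.adj_comm, hβ k i, add_comm (t k)]
  · simp only [Amat, epsHat, Matrix.add_apply, Matrix.of_apply, h, if_false,
      Matrix.diagonal_apply_ne _ h, edgeW, G.adj_comm j i, hβ j i, add_comm (t j)]
    split_ifs <;> simp

/-- The balance equation in matrix form. -/
theorem rootSum_vecMul (G : SimpleGraph V) {β : V → V → ℝ} (hβ : ∀ i j, β i j = β j i)
    (ε t : V → ℝ) (x : V) :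
    Matrix.vecMul (rootSum (edgeW G β ε t) x) (Amat G β t + epsHat ε t) =
      Pi.single x (totalSum (edgeW G β ε t) * (ε x * Real.exp (t x))) := by
  funext z
  have h := rootSum_balance (edgeW G β ε t) x z
  simp only [Matrix.vecMul, dotProduct, pinned_apply G hβ, mul_sub, Finset.sum_sub_distrib,
    mul_ite, mul_zero, Finset.sum_ite_eq', Finset.mem_univ, if_true, h, add_sub_cancel_right]
  by_cases hz : z = x
  · subst hz
    simp [edgeW]
  · simp [hz]

theorem pinned_mulVec (G : SimpleGraph V) {β : V → V → ℝ} (hβ : ∀ i j, β i j = β j i)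
    (ε t v : V → ℝ) (i : V) :
    Matrix.mulVec (Amat G β t + epsHat ε t) v i =
      ε i * Real.exp (t i) * v i + ∑ j, edgeW G β ε t i (some j) * (v i - v j) := by
  have hs : ∀ j, edgeW G β ε t j (some i) = edgeW G β ε t i (some j) := fun j => by
    simp only [edgeW, G.adj_comm j i, hβ j i, add_comm (t j)]
  simp only [Matrix.mulVec, dotProduct, pinned_apply G hβ, hs, sub_mul, mul_sub,
    Finset.sum_sub_distrib, ite_mul, zero_mul, Finset.sum_ite_eq, Finset.mem_univ, if_true,
    Fintype.sum_option, add_mul, Finset.sum_mul]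
  simp only [edgeW]
  ring

/-- Maximum principle: if the maximum of a null vector were positive, the equation would spread it
from a maximum point to all its neighbours, hence by connectedness to a vertex with `ε > 0`, where
the equation fails. -/
theorem le_zero_of_mulVec_eq_zero {G : SimpleGraph V} (hG : G.Connected) {β : V → V → ℝ}
    (hβ : ∀ i j, β i j = β j i)
    (hβpos : ∀ i j, G.Adj i j → 0 < β i j) {ε : V → ℝ} (hε : ∀ i, 0 ≤ ε i)
    (hε' : ∃ i, 0 < ε i) (t : V → ℝ) {v : V → ℝ}
    (hv : Matrix.mulVec (Amat G β t + epsHat ε t) v = 0) (i : V) : v i ≤ 0 := by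
  obtain ⟨r, hr⟩ := hε'
  obtain ⟨m, -, hm⟩ := Finset.exists_max_image Finset.univ v ⟨r, Finset.mem_univ r⟩
  refine (hm i (Finset.mem_univ i)).trans ?_
  by_contra! hpos
  have hterm : ∀ a, v a = v m → ∀ j ∈ Finset.univ,
      0 ≤ edgeW G β ε t a (some j) * (v a - v j) := by
    intro a ha j _
    refine mul_nonneg ?_ (sub_nonneg.2 (ha ▸ hm j (Finset.mem_univ j)))
    simp only [edgeW]
    split_ifs with h
    · exact mul_nonneg (hβpos _ _ h).le (Real.exp_pos _).le
    · exact le_rfl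
  have hzero : ∀ a, v a = v m → ε a * Real.exp (t a) * v a = 0 ∧
      ∑ j, edgeW G β ε t a (some j) * (v a - v j) = 0 := by
    intro a ha
    have h := congrFun hv a
    rw [pinned_mulVec G hβ] at h
    have h1 : 0 ≤ ε a * Real.exp (t a) * v a :=
      mul_nonneg (mul_nonneg (hε a) (Real.exp_pos _).le) (ha ▸ hpos.le)
    have h2 := Finset.sum_nonneg (hterm a ha)
    simp only [Pi.zero_apply] at h
    constructor <;> linarith
  have hstep : ∀ a b, G.Adj a b → v a = v m → v b = v m := by
    intro a b hab ha
    have h := (Finset.sum_eq_zero_iff_of_nonneg (hterm a ha)).1 (hzero a ha).2 b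
      (Finset.mem_univ b)
    have hw : edgeW G β ε t a (some b) ≠ 0 := by
      simp [edgeW, hab, (hβpos a b hab).ne']
    have := (mul_eq_zero.1 h).resolve_left hw
    linarith
  have hall : v r = v m := by
    obtain ⟨p⟩ := hG m r
    suffices H : ∀ a b, G.Walk a b → v a = v m → v b = v m from H m r p rfl
    intro a b p
    induction p with
    | nil => exact id
    | cons h _ ih => exact fun ha => ih (hstep _ _ h ha)
  have := (hzero r hall).1
  rw [hall] at this
  exact (mul_pos (mul_pos hr (Real.exp_pos _)) hpos).ne' this

theorem pinned_isUnit_det {G : SimpleGraph V} (hG : G.Connected) {β : V → V → ℝ}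
    (hβ : ∀ i j, β i j = β j i)
    (hβpos : ∀ i j, G.Adj i j → 0 < β i j) {ε : V → ℝ} (hε : ∀ i, 0 ≤ ε i)
    (hε' : ∃ i, 0 < ε i) (t : V → ℝ) : IsUnit (Amat G β t + epsHat ε t).det := by
  rw [isUnit_iff_ne_zero]
  intro h
  obtain ⟨v, hv0, hv⟩ := Matrix.exists_mulVec_eq_zero_iff.2 h
  refine hv0 (funext fun i => le_antisymm ?_ ?_)
  · exact le_zero_of_mulVec_eq_zero hG hβ hβpos hε hε' t hv i
  · have := le_zero_of_mulVec_eq_zero hG hβ hβpos hε hε' t (v := -v)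
      (by rw [Matrix.mulVec_neg, hv, neg_zero]) i
    simpa using this

end Main

/-- for distinct `x, y ∈ V` and any `t ∈ ℝ^V`,
`ε_x e^{t_x} (A(t)+ε̂(t))⁻¹_{xy}
  = (Σ_{T ∈ 𝒯_xy} Π_{(i∼j)∈T} β_ij e^{t_i+t_j}) / (Σ_{T ∈ 𝒯} Π_{(i∼j)∈T} β_ij e^{t_i+t_j})`,
where `𝒯_xy = {T ∈ 𝒯 : x ∈ R(T) and x ↔_T y}`, `β_iρ := ε_i` and `t_ρ := 0`. -/
theorem stmt_3 {V : Type*} [Fintype V] [DecidableEq V]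
    (G : SimpleGraph V) (hG : G.Connected)
    (β : V → V → ℝ) (hβsymm : ∀ i j, β i j = β j i)
    (hβpos : ∀ i j, G.Adj i j → 0 < β i j)
    (ε : V → ℝ) (hε : ∀ i, 0 ≤ ε i) (hε' : ∃ i, 0 < ε i)
    (x y : V) (hxy : x ≠ y) (t : V → ℝ) :
    ε x * Real.exp (t x) * (Amat G β t + epsHat ε t)⁻¹ x y
      = (∑ T ∈ (STrees (aug G)).filter (fun T => rootEdge x ∈ T ∧ connIn T x y),
            ∏ e ∈ T, treeW β ε t e)
        / (∑ T ∈ STrees (aug G), ∏ e ∈ T, treeW β ε t e) := by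
  have hN := sum_trees_eq G hβsymm ε t (fun T => rootEdge x ∈ T ∧ connIn T x y)
    (fun f => RootOf f y x) fun f hf => rootEdge_and_connIn_iff hf x y
  have hZ := sum_trees_eq G hβsymm ε t (fun _ => True) (fun _ => True) fun _ _ => Iff.rfl
  simp only [Finset.filter_true, and_true] at hZ
  have hpos := totalSum_pos hG hβpos hε hε' t
  have hdet := pinned_isUnit_det hG hβsymm hβpos hε hε' t
  have h := congrFun (congrArg (fun v => Matrix.vecMul v (Amat G β t + epsHat ε t)⁻¹)
    (rootSum_vecMul G hβsymm ε t x)) y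
  simp only [Matrix.vecMul_vecMul, Matrix.mul_nonsing_inv _ hdet, Matrix.vecMul_one,
    Matrix.single_vecMul, Pi.smul_apply, smul_eq_mul] at h
  have hN' : ∑ T ∈ (STrees (aug G)).filter (fun T => rootEdge x ∈ T ∧ connIn T x y),
      ∏ e ∈ T, treeW β ε t e = rootSum (edgeW G β ε t) x y := by
    rw [rootSum]
    convert hN
  have hZ' : ∑ T ∈ STrees (aug G), ∏ e ∈ T, treeW β ε t e = totalSum (edgeW G β ε t) := by
    rw [totalSum, hZ]
  rw [hN', hZ', eq_div_iff hpos.ne', h, Matrix.row_apply]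
  ring

end H22
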